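/- arXiv:1804.07977 — 3 statements merged into one kernel-verified Lean document; each statement's English description precedes it below -/
import Mathlib

section
/- Let φ : (0,∞) → (0,∞) be continuous with s ↦ s·φ(s) integrable near 0, let Φ(t) = ∫₀^{|t|} s·φ(s) ds, and let 1 < l ≤ m be constants such that l ≤ φ(t)·t²/Φ(t) ≤ m for all t > 0. Then for all ρ > 0 and t > 0 one has min{t^l, t^m}·Φ(ρ) ≤ Φ(ρ·t) ≤ max{t^l, t^m}·Φ(ρ). -/
open Real MeasureTheory Set Filter Topology

/-!
With `f s = s * φ s`, the hypothesis reads `l * Φ t ≤ t * f t ≤ m * Φ t`, and `f` is the derivative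
of `Φ` on `(0, ∞)`. As `(Φ t / t ^ p)' = (t * f t - p * Φ t) / t ^ (p + 1)`, the quotient
`Φ t / t ^ l` is nondecreasing and `Φ t / t ^ m` is nonincreasing. Comparing their values at `ρ` and
`ρ * t` gives the four bounds, according to whether `1 ≤ t` or `t ≤ 1`.
-/

section EulerInequality

variable {F F' : ℝ → ℝ} {l m p ρ t : ℝ}

theorem hasDerivAt_div_rpow {y x : ℝ} (hF : HasDerivAt F y x) (hx : 0 < x) :
    HasDerivAt (fun z ↦ F z / z ^ p) ((x * y - p * F x) / x ^ (p + 1)) x := by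
  have hxp : x ^ p ≠ 0 := (rpow_pos_of_pos hx p).ne'
  refine (hF.div (hasDerivAt_rpow_const (Or.inl hx.ne')) hxp).congr_deriv ?_
  rw [rpow_sub_one hx.ne', rpow_add_one hx.ne']
  field_simp

theorem monotoneOn_div_rpow_of_mul_le_mul_deriv (hF : ∀ x > 0, HasDerivAt F (F' x) x)
    (hp : ∀ x > 0, p * F x ≤ x * F' x) : MonotoneOn (fun x ↦ F x / x ^ p) (Ioi 0) := by
  have hderiv (x : ℝ) (hx : 0 < x) := hasDerivAt_div_rpow (p := p) (hF x hx) hx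
  refine monotoneOn_of_hasDerivWithinAt_nonneg (convex_Ioi 0)
    (f' := fun x ↦ (x * F' x - p * F x) / x ^ (p + 1))
    (fun x hx ↦ (hderiv x hx).continuousAt.continuousWithinAt) ?_ ?_ <;> rw [interior_Ioi]
  · exact fun x hx ↦ (hderiv x hx).hasDerivWithinAt
  · exact fun x hx ↦ div_nonneg (sub_nonneg.2 (hp x hx)) (rpow_nonneg (le_of_lt hx) _)

theorem rpow_mul_le_of_mul_le_mul_deriv (hF : ∀ x > 0, HasDerivAt F (F' x) x)
    (hp : ∀ x > 0, p * F x ≤ x * F' x) (hρ : 0 < ρ) (ht : 1 ≤ t) :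
    t ^ p * F ρ ≤ F (ρ * t) := by
  have ht₀ : 0 < t := one_pos.trans_le ht
  have hquot : F ρ / ρ ^ p ≤ F (ρ * t) / (ρ * t) ^ p :=
    monotoneOn_div_rpow_of_mul_le_mul_deriv hF hp hρ (mul_pos hρ ht₀)
      (le_mul_of_one_le_right hρ.le ht)
  calc
    t ^ p * F ρ = F ρ / ρ ^ p * (ρ * t) ^ p := by rw [mul_rpow hρ.le ht₀.le]; field_simp
    _ ≤ F (ρ * t) := (le_div_iff₀ (rpow_pos_of_pos (mul_pos hρ ht₀) p)).1 hquot

theorem le_rpow_mul_of_mul_le_mul_deriv (hF : ∀ x > 0, HasDerivAt F (F' x) x)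
    (hp : ∀ x > 0, p * F x ≤ x * F' x) (hρ : 0 < ρ) (ht₀ : 0 < t) (ht : t ≤ 1) :
    F (ρ * t) ≤ t ^ p * F ρ := by
  have hinv : t⁻¹ ^ p * F (ρ * t) ≤ F (ρ * t * t⁻¹) :=
    rpow_mul_le_of_mul_le_mul_deriv hF hp (mul_pos hρ ht₀) ((one_le_inv₀ ht₀).2 ht)
  rwa [mul_inv_cancel_right₀ ht₀.ne', inv_rpow ht₀.le,
    inv_mul_le_iff₀ (rpow_pos_of_pos ht₀ p)] at hinv

theorem le_rpow_mul_of_mul_deriv_le_mul (hF : ∀ x > 0, HasDerivAt F (F' x) x)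
    (hp : ∀ x > 0, x * F' x ≤ p * F x) (hρ : 0 < ρ) (ht : 1 ≤ t) :
    F (ρ * t) ≤ t ^ p * F ρ := by
  have hneg : t ^ p * -F ρ ≤ -F (ρ * t) :=
    rpow_mul_le_of_mul_le_mul_deriv (fun x hx ↦ (hF x hx).neg)
      (fun x hx ↦ by simpa using hp x hx) hρ ht
  simpa using hneg

theorem rpow_mul_le_of_mul_deriv_le_mul (hF : ∀ x > 0, HasDerivAt F (F' x) x)
    (hp : ∀ x > 0, x * F' x ≤ p * F x) (hρ : 0 < ρ) (ht₀ : 0 < t) (ht : t ≤ 1) :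
    t ^ p * F ρ ≤ F (ρ * t) := by
  have hneg : -F (ρ * t) ≤ t ^ p * -F ρ :=
    le_rpow_mul_of_mul_le_mul_deriv (fun x hx ↦ (hF x hx).neg)
      (fun x hx ↦ by simpa using hp x hx) hρ ht₀ ht
  simpa using hneg

theorem min_rpow_mul_le_of_mul_deriv_bounds (hF : ∀ x > 0, HasDerivAt F (F' x) x)
    (hl : ∀ x > 0, l * F x ≤ x * F' x) (hm : ∀ x > 0, x * F' x ≤ m * F x)
    (hρ : 0 < ρ) (hFρ : 0 ≤ F ρ) (ht : 0 < t) :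
    min (t ^ l) (t ^ m) * F ρ ≤ F (ρ * t) := by
  rcases le_total 1 t with ht₁ | ht₁
  · exact (mul_le_mul_of_nonneg_right (min_le_left _ _) hFρ).trans
      (rpow_mul_le_of_mul_le_mul_deriv hF hl hρ ht₁)
  · exact (mul_le_mul_of_nonneg_right (min_le_right _ _) hFρ).trans
      (rpow_mul_le_of_mul_deriv_le_mul hF hm hρ ht ht₁)

theorem le_max_rpow_mul_of_mul_deriv_bounds (hF : ∀ x > 0, HasDerivAt F (F' x) x)
    (hl : ∀ x > 0, l * F x ≤ x * F' x) (hm : ∀ x > 0, x * F' x ≤ m * F x)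
    (hρ : 0 < ρ) (hFρ : 0 ≤ F ρ) (ht : 0 < t) :
    F (ρ * t) ≤ max (t ^ l) (t ^ m) * F ρ := by
  rcases le_total 1 t with ht₁ | ht₁
  · exact (le_rpow_mul_of_mul_deriv_le_mul hF hm hρ ht₁).trans
      (mul_le_mul_of_nonneg_right (le_max_right _ _) hFρ)
  · exact (le_rpow_mul_of_mul_le_mul_deriv hF hl hρ ht ht₁).trans
      (mul_le_mul_of_nonneg_right (le_max_left _ _) hFρ)

end EulerInequality

section Primitive

variable {E : Type*} [NormedAddCommGroup E] {f : ℝ → E} {a b t : ℝ}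

theorem intervalIntegrable_of_continuousOn_Ioi (hf : ContinuousOn f (Ioi a))
    (hint : IntervalIntegrable f volume a b) (hb : a < b) (ht : a < t) :
    IntervalIntegrable f volume a t :=
  hint.trans <| ContinuousOn.intervalIntegrable <|
    hf.mono fun _ hx ↦ (lt_min hb ht).trans_le hx.1

theorem hasDerivAt_integral_of_continuousOn_Ioi [NormedSpace ℝ E] [CompleteSpace E]
    (hf : ContinuousOn f (Ioi a)) (hint : IntervalIntegrable f volume a t) (ht : a < t) :
    HasDerivAt (fun u ↦ ∫ s in a..u, f s) (f t) t :=
  intervalIntegral.integral_hasDerivAt_right hint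
    (hf.stronglyMeasurableAtFilter isOpen_Ioi t ht) (hf.continuousAt (Ioi_mem_nhds ht))

end Primitive

theorem stmt_0_general (φ Φ : ℝ → ℝ) (l m : ℝ)
    (hφcont : ContinuousOn φ (Ioi 0)) (hφpos : ∀ t > 0, 0 < φ t)
    (hint : IntegrableOn (fun s ↦ s * φ s) (Ioc 0 1))
    (hΦ : ∀ t : ℝ, Φ t = ∫ s in (0 : ℝ)..|t|, s * φ s)
    (hφ3 : ∀ t > 0, l ≤ φ t * t ^ 2 / Φ t ∧ φ t * t ^ 2 / Φ t ≤ m) :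
    ∀ ρ > (0 : ℝ), ∀ t > (0 : ℝ),
      min (t ^ l) (t ^ m) * Φ ρ ≤ Φ (ρ * t) ∧
      Φ (ρ * t) ≤ max (t ^ l) (t ^ m) * Φ ρ := by
  have hcont : ContinuousOn (fun s ↦ s * φ s) (Ioi 0) := continuousOn_id.mul hφcont
  have hint' (t : ℝ) (ht : 0 < t) : IntervalIntegrable (fun s ↦ s * φ s) volume 0 t :=
    intervalIntegrable_of_continuousOn_Ioi hcont
      ((intervalIntegrable_iff_integrableOn_Ioc_of_le zero_le_one).2 hint) one_pos ht
  have hΦ_of_pos (t : ℝ) (ht : 0 < t) : Φ t = ∫ s in (0 : ℝ)..t, s * φ s := by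
    rw [hΦ, abs_of_pos ht]
  have hΦpos (t : ℝ) (ht : 0 < t) : 0 < Φ t := by
    rw [hΦ_of_pos t ht]
    exact intervalIntegral.intervalIntegral_pos_of_pos_on (hint' t ht)
      (fun s hs ↦ mul_pos hs.1 (hφpos s hs.1)) ht
  have hderiv (t : ℝ) (ht : 0 < t) : HasDerivAt Φ (t * φ t) t :=
    (hasDerivAt_integral_of_continuousOn_Ioi hcont (hint' t ht) ht).congr_of_eventuallyEq <|
      eventually_of_mem (Ioi_mem_nhds ht) hΦ_of_pos
  have hlower (t : ℝ) (ht : 0 < t) : l * Φ t ≤ t * (t * φ t) := by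
    linarith [(le_div_iff₀ (hΦpos t ht)).1 (hφ3 t ht).1]
  have hupper (t : ℝ) (ht : 0 < t) : t * (t * φ t) ≤ m * Φ t := by
    linarith [(div_le_iff₀ (hΦpos t ht)).1 (hφ3 t ht).2]
  exact fun ρ hρ t ht ↦
    ⟨min_rpow_mul_le_of_mul_deriv_bounds hderiv hlower hupper hρ (hΦpos ρ hρ).le ht,
      le_max_rpow_mul_of_mul_deriv_bounds hderiv hlower hupper hρ (hΦpos ρ hρ).le ht⟩

/-- Lemma 2.1 (comparison inequalities for an N-function Φ satisfying (φ₃)'):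
if `l ≤ φ(t)·t²/Φ(t) ≤ m` for all `t > 0`, then
`min{t^l, t^m}·Φ(ρ) ≤ Φ(ρ·t) ≤ max{t^l, t^m}·Φ(ρ)` for all `ρ, t > 0`. -/
theorem stmt_0 (φ Φ : ℝ → ℝ) (l m : ℝ)
    (hφcont : ContinuousOn φ (Set.Ioi (0 : ℝ)))
    (hφpos : ∀ t > (0 : ℝ), 0 < φ t)
    (hint : MeasureTheory.IntegrableOn (fun s : ℝ => s * φ s) (Set.Ioc (0 : ℝ) 1))
    (hΦ : ∀ t : ℝ, Φ t = ∫ s in (0 : ℝ)..|t|, s * φ s)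
    (hl : 1 < l) (hlm : l ≤ m)
    (hφ3 : ∀ t > (0 : ℝ), l ≤ φ t * t ^ 2 / Φ t ∧ φ t * t ^ 2 / Φ t ≤ m) :
    ∀ ρ > (0 : ℝ), ∀ t > (0 : ℝ),
      min (t ^ l) (t ^ m) * Φ ρ ≤ Φ (ρ * t) ∧
      Φ (ρ * t) ≤ max (t ^ l) (t ^ m) * Φ ρ :=
  stmt_0_general φ Φ l m hφcont hφpos hint hΦ hφ3
end

section
/- Let (Ω, μ) be a measure space and let u : Ω → ℝ be measurable with 0 < |u|_{L^Φ} < ∞, where |u|_{L^Φ} denotes the Luxemburg norm of u. Then min{|u|_{L^Φ}^l, |u|_{L^Φ}^m} ≤ ∫_Ω Φ(u(x)) dμ(x) ≤ max{|u|_{L^Φ}^l, |u|_{L^Φ}^m}. -/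
open Real MeasureTheory Set Filter Topology

/-!
The condition `l ≤ φ(t) t² / Φ(t) ≤ m` says that `t ↦ Φ(t) t⁻ˡ` is nondecreasing and
`t ↦ Φ(t) t⁻ᵐ` is nonincreasing on `(0, ∞)`, so that `Φ(st) ≤ max (sˡ, sᵐ) Φ(t)`. Integrating,
`∫ Φ(su) ≤ max (sˡ, sᵐ) ∫ Φ(u)`. Applied to `u / b` with `s = b`, and to `u` with `s = b⁻¹`, this
compares `∫ Φ(u)` with `∫ Φ(u / b)`, which exceeds `1` for `b` below the norm and is at most `1` for
some `b` arbitrarily close to the norm; both bounds follow by letting `b` tend to the norm.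
-/

/-- A function `Φ` satisfies power scaling with exponents `l` and `m` if dilating its argument by
`s > 0` costs at most a factor `max (sˡ, sᵐ)`. The matching lower bound `min (sˡ, sᵐ) Φ(t) ≤ Φ(st)`
is this inequality for `s⁻¹` and `st`, so it is not recorded separately. -/
def HasPowerScaling (Φ : ℝ → ℝ) (l m : ℝ) : Prop :=
  ∀ s > 0, ∀ t, Φ (s * t) ≤ max (s ^ l) (s ^ m) * Φ t

/-- The even function `Φ(t) = ∫₀^{|t|} s φ(s) ds` generated by `φ`, an N-function under the usual
hypotheses on `φ`. -/
noncomputable def nFunction (φ : ℝ → ℝ) (t : ℝ) : ℝ :=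
  ∫ s in (0 : ℝ)..|t|, s * φ s

/-- The modular `∫ Φ(u) dμ` of the Orlicz space `L^Φ(μ)`, as a Bochner integral: it is `0` when
`Φ ∘ u` is not integrable. -/
noncomputable def modular {Ω : Type*} [MeasurableSpace Ω] (Φ : ℝ → ℝ) (μ : Measure Ω)
    (u : Ω → ℝ) : ℝ :=
  ∫ x, Φ (u x) ∂μ

/-- The Luxemburg norm `|u|_{L^Φ}`, the infimum of the `b > 0` for which `u / b` has modular at
most `1`. It is `0` when there is no such `b`. -/
noncomputable def luxemburgNorm {Ω : Type*} [MeasurableSpace Ω] (Φ : ℝ → ℝ) (μ : Measure Ω)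
    (u : Ω → ℝ) : ℝ :=
  sInf {b : ℝ | 0 < b ∧ modular Φ μ (fun x => u x / b) ≤ 1}

section PowerScaling

variable {F F' : ℝ → ℝ} {l m p s t : ℝ}

theorem hasDerivAt_mul_rpow_neg {d : ℝ} (ht : 0 < t) (hF : HasDerivAt F d t) :
    HasDerivAt (fun x => F x * x ^ (-p)) (t ^ (-p - 1) * (t * d - p * F t)) t := by
  have hpow : t ^ (-p) = t ^ (-p - 1) * t := by
    rw [← rpow_add_one ht.ne', sub_add_cancel]
  refine (hF.mul (hasDerivAt_rpow_const (p := -p) (Or.inl ht.ne'))).congr_deriv ?_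
  rw [hpow]
  ring

theorem monotoneOn_mul_rpow_neg (hF : ∀ t > 0, HasDerivAt F (F' t) t)
    (hp : ∀ t > 0, p * F t ≤ t * F' t) : MonotoneOn (fun t => F t * t ^ (-p)) (Ioi 0) := by
  have hderiv (t : ℝ) (ht : 0 < t) := hasDerivAt_mul_rpow_neg (p := p) ht (hF t ht)
  refine monotoneOn_of_hasDerivWithinAt_nonneg (convex_Ioi 0)
    (f' := fun t => t ^ (-p - 1) * (t * F' t - p * F t))
    (fun t ht => (hderiv t ht).continuousAt.continuousWithinAt) ?_ ?_ <;> rw [interior_Ioi]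
  · exact fun t ht => (hderiv t ht).hasDerivWithinAt
  · exact fun t ht => mul_nonneg (rpow_nonneg (le_of_lt ht) _) (sub_nonneg.2 (hp t ht))

theorem apply_mul_le_rpow_mul_of_le_one (hF : ∀ t > 0, HasDerivAt F (F' t) t)
    (hp : ∀ t > 0, p * F t ≤ t * F' t) (hs : 0 < s) (hs1 : s ≤ 1) (ht : 0 < t) :
    F (s * t) ≤ s ^ p * F t := by
  have hst : 0 < s * t := mul_pos hs ht
  have hmono : F (s * t) * (s * t) ^ (-p) ≤ F t * t ^ (-p) :=
    monotoneOn_mul_rpow_neg hF hp hst ht (mul_le_of_le_one_left ht.le hs1)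
  calc F (s * t) = F (s * t) * (s * t) ^ (-p) * (s * t) ^ p := by
        rw [mul_assoc, ← rpow_add hst, neg_add_cancel, rpow_zero, mul_one]
    _ ≤ F t * t ^ (-p) * (s * t) ^ p := by gcongr
    _ = s ^ p * F t * (t ^ (-p) * t ^ p) := by rw [mul_rpow hs.le ht.le]; ring
    _ = s ^ p * F t := by rw [← rpow_add ht, neg_add_cancel, rpow_zero, mul_one]

theorem apply_mul_le_rpow_mul_of_one_le (hF : ∀ t > 0, HasDerivAt F (F' t) t)
    (hp : ∀ t > 0, t * F' t ≤ p * F t) (hs : 1 ≤ s) (ht : 0 < t) :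
    F (s * t) ≤ s ^ p * F t := by
  have hs0 : 0 < s := zero_lt_one.trans_le hs
  -- The contraction by `s⁻¹` of `-F` takes `s * t` back to `t`.
  have hneg : -F (s⁻¹ * (s * t)) ≤ s⁻¹ ^ p * -F (s * t) :=
    apply_mul_le_rpow_mul_of_le_one (F := fun t => -F t) (F' := fun t => -F' t)
      (fun t ht => (hF t ht).neg)
      (fun t ht => by simpa only [mul_neg, neg_le_neg_iff] using hp t ht)
      (inv_pos.2 hs0) (inv_le_one_of_one_le₀ hs) (mul_pos hs0 ht)
  rwa [inv_mul_cancel_left₀ hs0.ne', inv_rpow hs0.le, mul_neg, neg_le_neg_iff,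
    inv_mul_le_iff₀ (rpow_pos_of_pos hs0 p)] at hneg

theorem apply_mul_le_max_rpow_mul (hF : ∀ t > 0, HasDerivAt F (F' t) t)
    (hl : ∀ t > 0, l * F t ≤ t * F' t) (hm : ∀ t > 0, t * F' t ≤ m * F t)
    (hs : 0 < s) (ht : 0 < t) (hFt : 0 ≤ F t) :
    F (s * t) ≤ max (s ^ l) (s ^ m) * F t := by
  rcases le_total s 1 with hs1 | hs1
  · exact (apply_mul_le_rpow_mul_of_le_one hF hl hs hs1 ht).trans
      (mul_le_mul_of_nonneg_right (le_max_left _ _) hFt)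
  · exact (apply_mul_le_rpow_mul_of_one_le hF hm hs1 ht).trans
      (mul_le_mul_of_nonneg_right (le_max_right _ _) hFt)

end PowerScaling

section NFunction

variable {φ : ℝ → ℝ} {l m t : ℝ}

theorem nFunction_abs (φ : ℝ → ℝ) (t : ℝ) : nFunction φ |t| = nFunction φ t := by
  simp only [nFunction, abs_abs]

theorem nFunction_zero (φ : ℝ → ℝ) : nFunction φ 0 = 0 := by
  simp only [nFunction, abs_zero, intervalIntegral.integral_same]

theorem nFunction_nonneg (hφ : ∀ t > 0, 0 ≤ φ t) (t : ℝ) : 0 ≤ nFunction φ t := by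
  refine intervalIntegral.integral_nonneg (abs_nonneg t) fun s hs => ?_
  rcases hs.1.eq_or_lt with rfl | hs0
  · rw [zero_mul]
  · exact mul_nonneg hs0.le (hφ s hs0)

theorem intervalIntegrable_id_mul (hφ : ContinuousOn φ (Ioi 0))
    (hint : IntegrableOn (fun s => s * φ s) (Ioc 0 1)) (ht : 0 < t) :
    IntervalIntegrable (fun s => s * φ s) volume 0 t := by
  refine ((intervalIntegrable_iff_integrableOn_Ioc_of_le zero_le_one).2 hint).trans
    (ContinuousOn.intervalIntegrable ?_)
  exact continuousOn_id.mul (hφ.mono fun s hs => (lt_min one_pos ht).trans_le hs.1)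

theorem nFunction_pos (hφ : ContinuousOn φ (Ioi 0)) (hφpos : ∀ t > 0, 0 < φ t)
    (hint : IntegrableOn (fun s => s * φ s) (Ioc 0 1)) (ht : 0 < t) : 0 < nFunction φ t := by
  rw [nFunction, abs_of_pos ht]
  exact intervalIntegral.intervalIntegral_pos_of_pos_on (intervalIntegrable_id_mul hφ hint ht)
    (fun s hs => mul_pos hs.1 (hφpos s hs.1)) ht

theorem hasDerivAt_nFunction (hφ : ContinuousOn φ (Ioi 0))
    (hint : IntegrableOn (fun s => s * φ s) (Ioc 0 1)) (ht : 0 < t) :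
    HasDerivAt (nFunction φ) (t * φ t) t := by
  have hcont : ContinuousOn (fun s => s * φ s) (Ioi 0) := continuousOn_id.mul hφ
  have hderiv := intervalIntegral.integral_hasDerivAt_right (intervalIntegrable_id_mul hφ hint ht)
    (hcont.stronglyMeasurableAtFilter isOpen_Ioi t ht) (hcont.continuousAt (Ioi_mem_nhds ht))
  refine hderiv.congr_of_eventuallyEq ?_
  filter_upwards [Ioi_mem_nhds ht] with x hx
  rw [nFunction, abs_of_pos hx]

theorem measurable_nFunction (hφ : ContinuousOn φ (Ioi 0))
    (hint : IntegrableOn (fun s => s * φ s) (Ioc 0 1)) : Measurable (nFunction φ) := by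
  have hcont : ContinuousOn (nFunction φ) (Ioi 0) := fun t ht =>
    (hasDerivAt_nFunction hφ hint ht).continuousAt.continuousWithinAt
  have hcont_abs : ContinuousOn (fun t => nFunction φ |t|) {0}ᶜ :=
    hcont.comp continuous_abs.continuousOn fun t ht => abs_pos.2 ht
  simp only [nFunction_abs] at hcont_abs
  exact measurable_of_continuousOn_compl_singleton 0 hcont_abs

theorem hasPowerScaling_nFunction (hφ : ContinuousOn φ (Ioi 0)) (hφpos : ∀ t > 0, 0 < φ t)
    (hint : IntegrableOn (fun s => s * φ s) (Ioc 0 1))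
    (hlm : ∀ t > 0, l ≤ φ t * t ^ 2 / nFunction φ t ∧ φ t * t ^ 2 / nFunction φ t ≤ m) :
    HasPowerScaling (nFunction φ) l m := by
  have hl : ∀ t > 0, l * nFunction φ t ≤ t * (t * φ t) := fun t ht => by
    linarith [(le_div_iff₀ (nFunction_pos hφ hφpos hint ht)).1 (hlm t ht).1]
  have hm : ∀ t > 0, t * (t * φ t) ≤ m * nFunction φ t := fun t ht => by
    linarith [(div_le_iff₀ (nFunction_pos hφ hφpos hint ht)).1 (hlm t ht).2]
  intro s hs t
  rcases eq_or_ne t 0 with rfl | ht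
  · simp only [mul_zero, nFunction_zero, le_refl]
  · have habs := apply_mul_le_max_rpow_mul (fun t ht => hasDerivAt_nFunction hφ hint ht) hl hm hs
      (abs_pos.2 ht) (nFunction_nonneg (fun t ht => (hφpos t ht).le) |t|)
    rwa [← nFunction_abs φ (s * t), abs_mul, abs_of_pos hs, ← nFunction_abs φ t]

end NFunction

section Modular

variable {Ω : Type*} [MeasurableSpace Ω] {μ : Measure Ω} {Φ : ℝ → ℝ} {u : Ω → ℝ} {l m b s : ℝ}

namespace HasPowerScaling

theorem integrable_comp_mul (h : HasPowerScaling Φ l m) (hΦ : Measurable Φ) (hΦ0 : ∀ t, 0 ≤ Φ t)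
    (hu : AEMeasurable u μ) (hs : 0 < s) (hint : Integrable (fun x => Φ (u x)) μ) :
    Integrable (fun x => Φ (s * u x)) μ := by
  refine (hint.const_mul (max (s ^ l) (s ^ m))).mono'
    (hΦ.comp_aemeasurable (hu.const_mul s)).aestronglyMeasurable (.of_forall fun x => ?_)
  rw [norm_of_nonneg (hΦ0 _)]
  exact h s hs (u x)

theorem modular_mul_le (h : HasPowerScaling Φ l m) (hΦ : Measurable Φ) (hΦ0 : ∀ t, 0 ≤ Φ t)
    (hu : AEMeasurable u μ) (hs : 0 < s) :
    modular Φ μ (fun x => s * u x) ≤ max (s ^ l) (s ^ m) * modular Φ μ u := by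
  by_cases hint : Integrable (fun x => Φ (s * u x)) μ
  · have hint_u : Integrable (fun x => Φ (u x)) μ := by
      simpa only [inv_mul_cancel_left₀ hs.ne'] using
        h.integrable_comp_mul hΦ hΦ0 (hu.const_mul s) (inv_pos.2 hs) hint
    rw [modular, modular, ← integral_const_mul]
    exact integral_mono hint (hint_u.const_mul _) fun x => h s hs (u x)
  · rw [modular, integral_undef hint]
    exact mul_nonneg (le_max_of_le_left (rpow_nonneg hs.le l)) (integral_nonneg fun x => hΦ0 (u x))

theorem modular_le_max_rpow (h : HasPowerScaling Φ l m) (hΦ : Measurable Φ)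
    (hΦ0 : ∀ t, 0 ≤ Φ t) (hu : AEMeasurable u μ) (hb : 0 < b)
    (hub : modular Φ μ (fun x => u x / b) ≤ 1) : modular Φ μ u ≤ max (b ^ l) (b ^ m) := by
  calc modular Φ μ u = modular Φ μ (fun x => b * (u x / b)) := by
        simp only [mul_div_cancel₀ _ hb.ne']
    _ ≤ max (b ^ l) (b ^ m) * modular Φ μ (fun x => u x / b) :=
        h.modular_mul_le hΦ hΦ0 (hu.div_const b) hb
    _ ≤ max (b ^ l) (b ^ m) :=
        mul_le_of_le_one_right (le_max_of_le_left (rpow_nonneg hb.le l)) hub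

theorem min_rpow_le_modular (h : HasPowerScaling Φ l m) (hΦ : Measurable Φ)
    (hΦ0 : ∀ t, 0 ≤ Φ t) (hu : AEMeasurable u μ) (hb : 0 < b)
    (hub : 1 ≤ modular Φ μ (fun x => u x / b)) : min (b ^ l) (b ^ m) ≤ modular Φ μ u := by
  have hmin : 0 < min (b ^ l) (b ^ m) := lt_min (rpow_pos_of_pos hb l) (rpow_pos_of_pos hb m)
  have hmax : max (b⁻¹ ^ l) (b⁻¹ ^ m) = (min (b ^ l) (b ^ m))⁻¹ := by
    rw [inv_rpow hb.le, inv_rpow hb.le]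
    exact (inv_antitoneOn_Ioi.map_min (rpow_pos_of_pos hb l) (rpow_pos_of_pos hb m)).symm
  have hle : 1 ≤ (min (b ^ l) (b ^ m))⁻¹ * modular Φ μ u := by
    rw [← hmax]
    refine hub.trans ?_
    simpa only [inv_mul_eq_div] using h.modular_mul_le hΦ hΦ0 hu (inv_pos.2 hb)
  rwa [le_inv_mul_iff₀ hmin, mul_one] at hle

end HasPowerScaling

theorem bddBelow_setOf_modular_div_le_one (Φ : ℝ → ℝ) (μ : Measure Ω) (u : Ω → ℝ) :
    BddBelow {b : ℝ | 0 < b ∧ modular Φ μ (fun x => u x / b) ≤ 1} :=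
  ⟨0, fun _ hb => hb.1.le⟩

theorem one_lt_modular_div_of_lt_luxemburgNorm (hb : 0 < b) (hbu : b < luxemburgNorm Φ μ u) :
    1 < modular Φ μ (fun x => u x / b) := by
  by_contra! hle
  exact notMem_of_lt_csInf hbu (bddBelow_setOf_modular_div_le_one Φ μ u) ⟨hb, hle⟩

theorem frequently_modular_div_le_one (hN : 0 < luxemburgNorm Φ μ u) :
    ∃ᶠ b in 𝓝 (luxemburgNorm Φ μ u), 0 < b ∧ modular Φ μ (fun x => u x / b) ≤ 1 := by
  have hne : {b : ℝ | 0 < b ∧ modular Φ μ (fun x => u x / b) ≤ 1}.Nonempty := by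
    by_contra! hempty
    rw [luxemburgNorm, hempty, Real.sInf_empty] at hN
    exact hN.false
  exact mem_closure_iff_frequently.1
    (csInf_mem_closure hne (bddBelow_setOf_modular_div_le_one Φ μ u))

namespace HasPowerScaling

theorem min_rpow_luxemburgNorm_le_modular (h : HasPowerScaling Φ l m) (hΦ : Measurable Φ)
    (hΦ0 : ∀ t, 0 ≤ Φ t) (hu : AEMeasurable u μ) (hN : 0 < luxemburgNorm Φ μ u) :
    min (luxemburgNorm Φ μ u ^ l) (luxemburgNorm Φ μ u ^ m) ≤ modular Φ μ u := by
  have hlim : ContinuousAt (fun b : ℝ => min (b ^ l) (b ^ m)) (luxemburgNorm Φ μ u) :=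
    (continuousAt_rpow_const _ l (Or.inl hN.ne')).min (continuousAt_rpow_const _ m (Or.inl hN.ne'))
  refine le_of_tendsto
    (hlim.tendsto.mono_left (nhdsWithin_le_nhds (s := Iio (luxemburgNorm Φ μ u)))) ?_
  filter_upwards [Ioo_mem_nhdsLT hN] with b hb
  exact h.min_rpow_le_modular hΦ hΦ0 hu hb.1
    (one_lt_modular_div_of_lt_luxemburgNorm hb.1 hb.2).le

theorem modular_le_max_rpow_luxemburgNorm (h : HasPowerScaling Φ l m) (hΦ : Measurable Φ)
    (hΦ0 : ∀ t, 0 ≤ Φ t) (hu : AEMeasurable u μ) (hN : 0 < luxemburgNorm Φ μ u) :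
    modular Φ μ u ≤ max (luxemburgNorm Φ μ u ^ l) (luxemburgNorm Φ μ u ^ m) := by
  have hlim : ContinuousAt (fun b : ℝ => max (b ^ l) (b ^ m)) (luxemburgNorm Φ μ u) :=
    (continuousAt_rpow_const _ l (Or.inl hN.ne')).max (continuousAt_rpow_const _ m (Or.inl hN.ne'))
  exact ge_of_tendsto_of_frequently hlim ((frequently_modular_div_le_one hN).mono
    fun b hb => h.modular_le_max_rpow hΦ hΦ0 hu hb.1 hb.2)

end HasPowerScaling

end Modular

theorem stmt_1_general {Ω : Type*} [MeasurableSpace Ω] {μ : Measure Ω} {φ : ℝ → ℝ} {l m : ℝ}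
    (hφ : ContinuousOn φ (Ioi 0)) (hφpos : ∀ t > 0, 0 < φ t)
    (hint : IntegrableOn (fun s => s * φ s) (Ioc 0 1))
    (hlm : ∀ t > 0, l ≤ φ t * t ^ 2 / nFunction φ t ∧ φ t * t ^ 2 / nFunction φ t ≤ m)
    {u : Ω → ℝ} (hu : AEMeasurable u μ) (hN : 0 < luxemburgNorm (nFunction φ) μ u) :
    min (luxemburgNorm (nFunction φ) μ u ^ l) (luxemburgNorm (nFunction φ) μ u ^ m) ≤
        modular (nFunction φ) μ u ∧
      modular (nFunction φ) μ u ≤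
        max (luxemburgNorm (nFunction φ) μ u ^ l) (luxemburgNorm (nFunction φ) μ u ^ m) := by
  have hscale : HasPowerScaling (nFunction φ) l m := hasPowerScaling_nFunction hφ hφpos hint hlm
  have hmeas : Measurable (nFunction φ) := measurable_nFunction hφ hint
  have hnonneg : ∀ t, 0 ≤ nFunction φ t := nFunction_nonneg fun t ht => (hφpos t ht).le
  exact ⟨hscale.min_rpow_luxemburgNorm_le_modular hmeas hnonneg hu hN,
    hscale.modular_le_max_rpow_luxemburgNorm hmeas hnonneg hu hN⟩

/-- Lemma 2.1, second part: for a measurable `u` with finite positive Luxemburg norm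
`|u|_{L^Φ}`, one has `min{|u|^l, |u|^m} ≤ ∫ Φ(u) ≤ max{|u|^l, |u|^m}`. -/
theorem stmt_1 {Ω : Type*} [MeasurableSpace Ω] (μ : Measure Ω)
    (φ Φ : ℝ → ℝ) (l m : ℝ)
    (hφcont : ContinuousOn φ (Set.Ioi (0 : ℝ)))
    (hφpos : ∀ t > (0 : ℝ), 0 < φ t)
    (hint : MeasureTheory.IntegrableOn (fun s : ℝ => s * φ s) (Set.Ioc (0 : ℝ) 1))
    (hΦ : ∀ t : ℝ, Φ t = ∫ s in (0 : ℝ)..|t|, s * φ s)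
    (hl : 1 < l) (hlm : l ≤ m)
    (hφ3 : ∀ t > (0 : ℝ), l ≤ φ t * t ^ 2 / Φ t ∧ φ t * t ^ 2 / Φ t ≤ m)
    (u : Ω → ℝ) (hu : Measurable u) (N : ℝ)
    -- `N` is the Luxemburg norm `|u|_{L^Φ}`:
    (hN : N = sInf {lam : ℝ | 0 < lam ∧ ∫ x, Φ (u x / lam) ∂μ ≤ 1})
    -- `0 < |u|_{L^Φ}`:
    (hNpos : 0 < N)
    -- `|u|_{L^Φ} < ∞`, i.e. the defining set is nonempty:
    (hfin : {lam : ℝ | 0 < lam ∧ ∫ x, Φ (u x / lam) ∂μ ≤ 1}.Nonempty) :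
    min (N ^ l) (N ^ m) ≤ ∫ x, Φ (u x) ∂μ ∧
    ∫ x, Φ (u x) ∂μ ≤ max (N ^ l) (N ^ m) := by
  obtain rfl : Φ = nFunction φ := funext hΦ
  subst hN
  exact stmt_1_general hφcont hφpos hint hφ3 hu.aemeasurable hNpos
end

section
/- Let φ : (0,∞) → (0,∞) be a C¹ function and let 1 < l ≤ m be constants such that l − 1 ≤ (d/dt)(t·φ(t)) / φ(t) ≤ m − 1 for all t > 0 (condition (φ₃)). Then, with Φ(t) = ∫₀^{|t|} s·φ(s) ds, one has l ≤ φ(t)·t²/Φ(t) ≤ m for all t > 0 (condition (φ₃)'). -/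
open Real MeasureTheory Set Filter Topology

/-!
Put `f s = s * φ s`, so that (φ₃) reads `(l - 1) * f s ≤ s * f' s ≤ (m - 1) * f s`. The derivative
of `s * f s` then lies between `l * f s` and `m * f s`; integrating over `[a, T]` bounds
`T * f T - a * f a` by multiples of `∫ s in a..T, f s`. In the upper bound the boundary term
disappears as `a → 0⁺` along a suitable sequence: if `s * f s ≥ ε > 0` held near `0`, then `f`
would dominate the non-integrable function `ε / s`. The lower bound is the upper bound for `-f`.
-/

theorem tendsto_integral_nhdsGT_left {E : Type*} [NormedAddCommGroup E] [NormedSpace ℝ E]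
    {f : ℝ → E} {a b : ℝ} (hab : a < b) (hf : IntervalIntegrable f volume a b) :
    Tendsto (fun x => ∫ s in x..b, f s) (𝓝[>] a) (𝓝 (∫ s in a..b, f s)) := by
  have hint : IntegrableOn f (uIcc a b) := by
    rwa [uIcc_of_le hab.le, ← intervalIntegrable_iff_integrableOn_Icc_of_le hab.le]
  have hcont := intervalIntegral.continuousOn_primitive_interval_left hint
  refine (hcont a left_mem_uIcc).mono_left (nhdsWithin_le_of_mem ?_)
  rw [uIcc_of_le hab.le]
  exact Icc_mem_nhdsGT hab

theorem not_integrableAtFilter_inv_nhdsGT_zero :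
    ¬ IntegrableAtFilter (fun s : ℝ => s⁻¹) (𝓝[>] 0) := by
  rintro ⟨u, hu, hint⟩
  obtain ⟨δ, hδ : 0 < δ, hsub⟩ := mem_nhdsGT_iff_exists_Ioc_subset.1 hu
  have hII : IntervalIntegrable (fun s : ℝ => s⁻¹) volume 0 δ :=
    (intervalIntegrable_iff_integrableOn_Ioc_of_le hδ.le).2 (hint.mono_set hsub)
  rcases intervalIntegrable_inv_iff.1 hII with h | h
  · exact hδ.ne h
  · exact h left_mem_uIcc

theorem frequently_mul_lt_of_integrableAtFilter {f : ℝ → ℝ} {c : ℝ}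
    (hf : IntegrableAtFilter f (𝓝[>] 0)) (hc : 0 < c) : ∃ᶠ s in 𝓝[>] 0, s * f s < c := by
  intro h
  have hbigO : (fun s : ℝ => s⁻¹) =O[𝓝[>] 0] f := by
    refine Asymptotics.IsBigO.of_bound c⁻¹ ?_
    filter_upwards [h, self_mem_nhdsWithin] with s hs (hs0 : 0 < s)
    have hdom : c / s ≤ f s := (div_le_iff₀' hs0).2 (not_lt.1 hs)
    calc ‖s⁻¹‖ = c⁻¹ * (c / s) := by
          rw [norm_of_nonneg (inv_nonneg.2 hs0.le)]
          field_simp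
      _ ≤ c⁻¹ * ‖f s‖ := by
          gcongr
          exact hdom.trans (le_norm_self _)
  refine not_integrableAtFilter_inv_nhdsGT_zero (hbigO.integrableAtFilter ?_ hf)
  exact ⟨univ, univ_mem, measurable_inv.aestronglyMeasurable⟩

section PrimitiveComparison

variable {f f' : ℝ → ℝ} {a c T : ℝ}

theorem mul_sub_mul_le_mul_integral_of_mul_deriv_le (haT : a ≤ T)
    (hf : ∀ s ∈ Icc a T, HasDerivAt f (f' s) s)
    (hle : ∀ s ∈ Icc a T, s * f' s ≤ (c - 1) * f s) :
    T * f T - a * f a ≤ c * ∫ s in a..T, f s := by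
  have hderiv (s : ℝ) (hs : s ∈ Icc a T) :
      HasDerivAt (fun s => s * f s) (1 * f s + s * f' s) s :=
    (hasDerivAt_id s).mul (hf s hs)
  have hcont : ContinuousOn f (Icc a T) := HasDerivAt.continuousOn hf
  rw [← intervalIntegral.integral_const_mul]
  refine intervalIntegral.sub_le_integral_of_hasDeriv_right_of_le haT
    (HasDerivAt.continuousOn hderiv)
    (fun s hs => (hderiv s (Ioo_subset_Icc_self hs)).hasDerivWithinAt)
    (hcont.const_mul c).integrableOn_Icc fun s hs => ?_
  linarith [hle s (Ioo_subset_Icc_self hs)]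

theorem mul_le_mul_integral_of_mul_deriv_le (hT : 0 < T) (hint : IntervalIntegrable f volume 0 T)
    (hf : ∀ s ∈ Ioc 0 T, HasDerivAt f (f' s) s)
    (hle : ∀ s ∈ Ioc 0 T, s * f' s ≤ (c - 1) * f s) :
    T * f T ≤ c * ∫ s in 0..T, f s := by
  have hint₀ : IntegrableAtFilter f (𝓝[>] 0) :=
    ⟨Ioc 0 T, Ioc_mem_nhdsGT hT, hint.1⟩
  refine le_of_forall_pos_le_add fun ε hε => ?_
  refine ge_of_tendsto_of_frequently
    (((tendsto_integral_nhdsGT_left hT hint).const_mul c).add_const ε) ?_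
  have hsmall : ∃ᶠ a in 𝓝[>] 0, a * f a < ε ∧ a ∈ Ioc 0 T :=
    (frequently_mul_lt_of_integrableAtFilter hint₀ hε).and_eventually (Ioc_mem_nhdsGT hT)
  refine hsmall.mono fun a ⟨ha_lt, ha⟩ => ?_
  have hsub : Icc a T ⊆ Ioc 0 T := fun s hs => ⟨ha.1.trans_le hs.1, hs.2⟩
  have hincr : T * f T - a * f a ≤ c * ∫ s in a..T, f s :=
    mul_sub_mul_le_mul_integral_of_mul_deriv_le ha.2 (fun s hs => hf s (hsub hs))
      fun s hs => hle s (hsub hs)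
  linarith only [ha_lt, hincr]

theorem mul_integral_le_mul_of_le_mul_deriv (hT : 0 < T) (hint : IntervalIntegrable f volume 0 T)
    (hf : ∀ s ∈ Ioc 0 T, HasDerivAt f (f' s) s)
    (hle : ∀ s ∈ Ioc 0 T, (c - 1) * f s ≤ s * f' s) :
    c * ∫ s in 0..T, f s ≤ T * f T := by
  have hneg : T * -f T ≤ c * ∫ s in 0..T, -f s :=
    mul_le_mul_integral_of_mul_deriv_le (f := fun s => -f s) (f' := fun s => -f' s) hT hint.neg
      (fun s hs => (hf s hs).neg) fun s hs => by linarith [hle s hs]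
  rw [intervalIntegral.integral_neg] at hneg
  linarith

end PrimitiveComparison

theorem stmt_2_general (φ Φ : ℝ → ℝ) (l m : ℝ) (g : ℝ → ℝ)
    (hφpos : ∀ t > (0 : ℝ), 0 < φ t)
    (hg : ∀ t > (0 : ℝ), HasDerivAt (fun s : ℝ => s * φ s) (g t) t)
    (hint : IntegrableOn (fun s : ℝ => s * φ s) (Ioc (0 : ℝ) 1))
    (hΦ : ∀ t : ℝ, Φ t = ∫ s in (0 : ℝ)..|t|, s * φ s)
    (hφ3 : ∀ t > (0 : ℝ), l - 1 ≤ g t / φ t ∧ g t / φ t ≤ m - 1) :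
    ∀ t > (0 : ℝ), l ≤ φ t * t ^ 2 / Φ t ∧ φ t * t ^ 2 / Φ t ≤ m := by
  intro t ht
  have hcont : ContinuousOn (fun s => s * φ s) (uIcc 1 t) := HasDerivAt.continuousOn fun s hs =>
    hg s ((lt_min one_pos ht).trans_le hs.1)
  have hII : IntervalIntegrable (fun s => s * φ s) volume 0 t :=
    ((intervalIntegrable_iff_integrableOn_Ioc_of_le zero_le_one).2 hint).trans
      hcont.intervalIntegrable
  have hslope (s : ℝ) (hs : 0 < s) :
      (l - 1) * (s * φ s) ≤ s * g s ∧ s * g s ≤ (m - 1) * (s * φ s) := by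
    obtain ⟨hl, hm⟩ := hφ3 s hs
    rw [le_div_iff₀ (hφpos s hs)] at hl
    rw [div_le_iff₀ (hφpos s hs)] at hm
    constructor <;>
      linarith [mul_le_mul_of_nonneg_left hl hs.le, mul_le_mul_of_nonneg_left hm hs.le]
  have hlower : l * (∫ s in 0..t, s * φ s) ≤ t * (t * φ t) :=
    mul_integral_le_mul_of_le_mul_deriv ht hII (fun s hs => hg s hs.1)
      fun s hs => (hslope s hs.1).1
  have hupper : t * (t * φ t) ≤ m * ∫ s in 0..t, s * φ s :=
    mul_le_mul_integral_of_mul_deriv_le ht hII (fun s hs => hg s hs.1)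
      fun s hs => (hslope s hs.1).2
  have hpos : 0 < ∫ s in 0..t, s * φ s :=
    intervalIntegral.intervalIntegral_pos_of_pos_on hII
      (fun s hs => mul_pos hs.1 (hφpos s hs.1)) ht
  rw [hΦ t, abs_of_pos ht, le_div_iff₀ hpos, div_le_iff₀ hpos,
    show φ t * t ^ 2 = t * (t * φ t) by ring]
  exact ⟨hlower, hupper⟩

/-- Condition (φ₃) implies condition (φ₃)': if `φ` is `C¹` on `(0,∞)` with
`l − 1 ≤ (t·φ(t))'/φ(t) ≤ m − 1` for all `t > 0`, then with
`Φ(t) = ∫₀^{|t|} s·φ(s) ds` one has `l ≤ φ(t)·t²/Φ(t) ≤ m` for all `t > 0`. -/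
theorem stmt_2 (φ Φ : ℝ → ℝ) (l m : ℝ) (g : ℝ → ℝ)
    (hφC1 : ContDiffOn ℝ 1 φ (Set.Ioi (0 : ℝ)))
    (hφpos : ∀ t > (0 : ℝ), 0 < φ t)
    -- `g` is the derivative of `t ↦ t·φ(t)` on `(0,∞)`:
    (hg : ∀ t > (0 : ℝ), HasDerivAt (fun s : ℝ => s * φ s) (g t) t)
    (hint : MeasureTheory.IntegrableOn (fun s : ℝ => s * φ s) (Set.Ioc (0 : ℝ) 1))
    (hΦ : ∀ t : ℝ, Φ t = ∫ s in (0 : ℝ)..|t|, s * φ s)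
    (hl : 1 < l) (hlm : l ≤ m)
    -- condition (φ₃):
    (hφ3 : ∀ t > (0 : ℝ), l - 1 ≤ g t / φ t ∧ g t / φ t ≤ m - 1) :
    -- condition (φ₃)':
    ∀ t > (0 : ℝ), l ≤ φ t * t ^ 2 / Φ t ∧ φ t * t ^ 2 / Φ t ≤ m := by
  exact stmt_2_general φ Φ l m g hφpos hg hint hΦ hφ3
end
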